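/- Let p_1, …, p_n be pairwise distinct primes, let M = p_1 ⋯ p_n, let M_i = M/p_i, and for each i let a_i be the unique integer with 0 ≤ a_i < p_i and a_i M_i ≡ 1 (mod p_i). Let c be an integer with 2|c| < M, and for each i let c_i be the unique integer with 0 ≤ c_i < p_i and c_i ≡ c (mod p_i). Let r be the integer nearest to Σ_{i=1}^n c_i a_i / p_i. Then c = Σ_{i=1}^n c_i a_i M_i − r·M. -/

import Mathlib

/-!
Write `S = ∑ i, c_i a_i M_i`. Modulo `p_j` every term with `i ≠ j` vanishes, since `p_j ∣ M_i`,
and the remaining term is `c_j a_j M_j ≡ c`. The `p_j` are pairwise coprime, so `S = c + k M` for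
some integer `k`. Dividing by `M`, the rational number `∑ i, c_i a_i / p_i` equals `k + c / M`, and
`|c / M| < 1 / 2`, so its nearest integer is `k`.
-/

open Finset

/-- **Explicit CRT.**  Let `p_1, …, p_n` be pairwise distinct primes with product `M`,
`M_i = M / p_i`, and `a_i ∈ {0, …, p_i - 1}` with `a_i M_i ≡ 1 (mod p_i)`.  Let `c ∈ ℤ`
with `2|c| < M` and let `c_i ∈ {0, …, p_i - 1}` with `c_i ≡ c (mod p_i)`.  If `r` is the
integer nearest to `Σᵢ c_i a_i / p_i`, then `c = Σᵢ c_i a_i M_i − r·M`. -/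
theorem stmt10 (n : ℕ) (p : Fin n → ℕ) (hp : ∀ i, (p i).Prime)
    (hpinj : Function.Injective p)
    (a : Fin n → ℕ) (ha_lt : ∀ i, a i < p i)
    (ha : ∀ i, (a i * ((∏ j, p j) / p i)) % p i = 1)
    (c : ℤ) (hc : 2 * |c| < (∏ j, p j : ℕ))
    (cc : Fin n → ℕ) (hcc_lt : ∀ i, cc i < p i)
    (hcc : ∀ i, (cc i : ℤ) ≡ c [ZMOD (p i)])
    (r : ℤ) (hr : r = round (∑ i, (cc i * a i : ℚ) / (p i : ℚ))) :
    c = (∑ i, (cc i : ℤ) * (a i : ℤ) * (((∏ j, p j) / p i : ℕ) : ℤ))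
          - r * (∏ j, p j : ℕ) := by
  set M : ℕ := ∏ j, p j with hM
  have hdvd : ∀ i, p i ∣ M := fun i => Finset.dvd_prod_of_mem p (Finset.mem_univ i)
  have hMpos : 0 < M := Finset.prod_pos fun i _ => (hp i).pos
  have hcop : ∀ i j, i ≠ j → Nat.Coprime (p i) (p j) := fun i j hij =>
    (Nat.coprime_primes (hp i) (hp j)).2 fun h => hij (hpinj h)
  have hoff : ∀ i j, i ≠ j → p j ∣ M / p i := fun i j hij => by
    refine (hcop i j hij).symm.dvd_of_dvd_mul_left ?_
    rw [Nat.mul_div_cancel' (hdvd i)]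
    exact hdvd j
  set S : ℤ := ∑ i, (cc i : ℤ) * (a i : ℤ) * ((M / p i : ℕ) : ℤ) with hS
  have hmod : ∀ j, (p j : ℤ) ∣ S - c := fun j => by
    have ha' : ((a j * (M / p j) : ℕ) : ℤ) ≡ 1 [ZMOD (p j)] := by
      have h : a j * (M / p j) ≡ 1 [MOD (p j)] := by
        rw [Nat.ModEq, ha j, Nat.mod_eq_of_lt (hp j).one_lt]
      exact_mod_cast Int.natCast_modEq_iff.2 h
    have hj : (p j : ℤ) ∣ (cc j : ℤ) * (a j : ℤ) * ((M / p j : ℕ) : ℤ) - c := by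
      have h := (hcc j).mul ha'
      rw [mul_one] at h
      have h' := h.symm.dvd
      rwa [Nat.cast_mul, ← mul_assoc] at h'
    rw [hS, ← Finset.add_sum_erase _ _ (Finset.mem_univ j), add_sub_right_comm]
    refine dvd_add hj (Finset.dvd_sum fun i hi => Dvd.dvd.mul_left ?_ _)
    exact Int.natCast_dvd_natCast.2 (hoff i j (Finset.ne_of_mem_erase hi))
  obtain ⟨k, hk⟩ : (M : ℤ) ∣ S - c := by
    rw [hM, Nat.cast_prod]
    refine Finset.prod_dvd_of_coprime (fun i _ j _ hij => ?_) fun i _ => hmod i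
    exact Nat.isCoprime_iff_coprime.2 (hcop i j hij)
  have hMq : (0 : ℚ) < M := by exact_mod_cast hMpos
  have hsum : (∑ i, (cc i * a i : ℚ) / (p i : ℚ)) = (S : ℚ) / M := by
    rw [hS, Int.cast_sum, Finset.sum_div]
    refine Finset.sum_congr rfl fun i _ => ?_
    have hpi : (p i : ℚ) ≠ 0 := by exact_mod_cast (hp i).ne_zero
    have hMi : (p i : ℚ) * ((M / p i : ℕ) : ℚ) = M := by
      exact_mod_cast Nat.mul_div_cancel' (hdvd i)
    rw [div_eq_div_iff hpi hMq.ne', ← hMi, Int.cast_mul, Int.cast_mul, Int.cast_natCast,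
      Int.cast_natCast, Int.cast_natCast]
    ring
  have hrk : r = k := by
    have hSq : (S : ℚ) = c + M * k := by
      have h : S = c + M * k := by linarith
      exact_mod_cast h
    have hcq : 2 * |(c : ℚ)| < M := by exact_mod_cast hc
    obtain ⟨h1, h2⟩ := abs_lt.1 (show |(c : ℚ)| < M / 2 by linarith)
    rw [hr, hsum, round_eq_iff, hSq, Set.mem_Ico, le_div_iff₀ hMq, div_lt_iff₀ hMq]
    constructor <;> linarith
  rw [hrk]
  linarith
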